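/- arXiv:2203.07346 — 2 statements merged into one kernel-verified Lean document; each statement's English description precedes it below -/
import Mathlib

section
/- Let G = (V,H) be a finite q-uniform hypergraph (q ≥ 2) with |V| = n and |H| = m, B its non-backtracking matrix, A its adjacency matrix, D its degree matrix, and B̃ the 2n × 2n block matrix [[0, D − I_n],[−(q−1)I_n, A − (q−2)I_n]]. Then: (1) for every λ ∈ ℂ with λ ∉ {1, −(q−1)}, λ is an eigenvalue of B if and only if λ is an eigenvalue of B̃; (2) if m ≥ n, then 1 is an eigenvalue of B with algebraic multiplicity at least (q−1)m − n, and −(q−1) is an eigenvalue of B with algebraic multiplicity at least m − n. -/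
/-!
Let `S` and `P` be the matrices sending an oriented hyperedge `v → e` to `v` and to `e`, and let `T`
record the vertices of `e` other than `v`. Then `Bᵀ = 1 + S Tᵀ - P Pᵀ` is a low-rank perturbation of
the identity. Since `A B` and `B A` have the same characteristic polynomial up to a power of `X`,
also after adding the same scalar to both, `B` has the same spectrum, up to copies of `1`, as
`M = [[-(q-1), R], [-(q-1)Rᵀ, A + 1]]`, where `R` is the hyperedge-vertex incidence matrix.
In turn `M + (q-1)` factors through `V ⊕ V` and, because `Rᵀ R = A + D`, swapping the factors gives
`B̃ + (q-1)`. So `M` has the same spectrum as `B̃` up to copies of `-(q-1)`.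
-/

open scoped BigOperators Matrix

namespace HypergraphNB

variable {n : ℕ}

/-- The type of oriented hyperedges `v → e` of a hypergraph with hyperedge set `H`. -/
def OEdge (H : Finset (Finset (Fin n))) : Type _ :=
  {a : Fin n × Finset (Fin n) // a.2 ∈ H ∧ a.1 ∈ a.2}

noncomputable instance (H : Finset (Finset (Fin n))) : Fintype (OEdge H) := by
  unfold OEdge; infer_instance

instance (H : Finset (Finset (Fin n))) : DecidableEq (OEdge H) := by
  unfold OEdge; exact Subtype.instDecidableEq

/-- The non-backtracking matrix `B` (over `ℂ`). -/
def nbMatrix (H : Finset (Finset (Fin n))) : Matrix (OEdge H) (OEdge H) ℂ :=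
  fun a b => if b.1.1 ∈ a.1.2 ∧ b.1.1 ≠ a.1.1 ∧ b.1.2 ≠ a.1.2 then 1 else 0

/-- The adjacency matrix `A` (over `ℂ`). -/
def adjMatrix (H : Finset (Finset (Fin n))) : Matrix (Fin n) (Fin n) ℂ :=
  fun i j => if i ≠ j then ((H.filter (fun e => i ∈ e ∧ j ∈ e)).card : ℂ) else 0

/-- The diagonal degree matrix `D` (over `ℂ`). -/
def degMatrix (H : Finset (Finset (Fin n))) : Matrix (Fin n) (Fin n) ℂ :=
  Matrix.diagonal (fun i => ((H.filter (fun e => i ∈ e)).card : ℂ))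

/-- The reduced `2n × 2n` matrix `B̃ = [[0, D − I], [−(q−1)I, A − (q−2)I]]`. -/
def redMatrix (q : ℕ) (H : Finset (Finset (Fin n))) :
    Matrix (Fin n ⊕ Fin n) (Fin n ⊕ Fin n) ℂ :=
  Matrix.fromBlocks 0 (degMatrix H - 1)
    (-(((q : ℂ) - 1) • (1 : Matrix (Fin n) (Fin n) ℂ)))
    (adjMatrix H - ((q : ℂ) - 2) • (1 : Matrix (Fin n) (Fin n) ℂ))

/-- `λ` is an eigenvalue of the square matrix `M` iff `det(M − λI) = 0`. -/
def IsEigenvalue {I : Type*} [Fintype I] [DecidableEq I]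
    (M : Matrix I I ℂ) (lam : ℂ) : Prop :=
  (M - lam • (1 : Matrix I I ℂ)).det = 0

open Matrix Polynomial

section Charpoly

variable {R k l : Type*} [CommRing R] [Fintype k] [DecidableEq k] [Fintype l] [DecidableEq l]

theorem charpoly_mul_add_scalar_comm (M : Matrix k l R) (N : Matrix l k R) (c : R) :
    (X - C c) ^ Fintype.card l * (M * N + scalar k c).charpoly =
      (X - C c) ^ Fintype.card k * (N * M + scalar l c).charpoly := by
  have h := congrArg (·.comp (X + C (-c))) (charpoly_mul_comm' M N)
  simp only [mul_comp, pow_comp, X_comp, ← charpoly_sub_scalar] at h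
  simpa only [map_neg, sub_neg_eq_add, ← sub_eq_add_neg] using h

theorem fromBlocks_add_scalar (M₁₁ : Matrix k k R) (M₁₂ : Matrix k l R) (M₂₁ : Matrix l k R)
    (M₂₂ : Matrix l l R) (c : R) :
    fromBlocks M₁₁ M₁₂ M₂₁ M₂₂ + scalar (k ⊕ l) c =
      fromBlocks (M₁₁ + c • 1) M₁₂ M₂₁ (M₂₂ + c • 1) := by
  rw [scalar_apply, ← smul_one_eq_diagonal, ← fromBlocks_one, fromBlocks_smul, fromBlocks_add]
  simp only [smul_zero, add_zero]

theorem isEigenvalue_iff_rootMultiplicity_pos (M : Matrix k k ℂ) (lam : ℂ) :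
    IsEigenvalue M lam ↔ 0 < M.charpoly.rootMultiplicity lam := by
  rw [rootMultiplicity_pos M.charpoly_monic.ne_zero, IsRoot.def, eval_charpoly, IsEigenvalue,
    ← neg_sub, det_neg, smul_one_eq_diagonal, scalar_apply]
  simp

theorem roots_X_sub_C_pow_mul_X_sub_C_pow_mul {A : Type*} [CommRing A] [IsDomain A] {p : A[X]}
    (hp : p ≠ 0) (a b : A) (i j : ℕ) :
    ((X - C a) ^ i * (X - C b) ^ j * p).roots = i • {a} + j • {b} + p.roots := by
  have ha : (X - C a) ^ i ≠ 0 := pow_ne_zero i (X_sub_C_ne_zero a)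
  have hb : (X - C b) ^ j ≠ 0 := pow_ne_zero j (X_sub_C_ne_zero b)
  rw [roots_mul (mul_ne_zero (mul_ne_zero ha hb) hp), roots_mul (mul_ne_zero ha hb), roots_pow,
    roots_pow, roots_X_sub_C, roots_X_sub_C]

end Charpoly

section Hypergraph

variable {q : ℕ} {H : Finset (Finset (Fin n))}

theorem sum_oedge {M : Type*} [AddCommMonoid M] (f : Fin n → Finset (Fin n) → M) :
    ∑ a : OEdge H, f a.1.1 a.1.2 = ∑ e ∈ H, ∑ v ∈ e, f v e := by
  rw [Finset.sum_sigma']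
  refine Finset.sum_bij (fun a _ => ⟨a.1.2, a.1.1⟩) (fun a _ => by simpa using a.2) ?_ ?_
    fun _ _ => rfl
  · intro a _ b _ hab
    simp only [Sigma.mk.injEq, heq_eq_eq] at hab
    exact Subtype.ext (Prod.ext hab.2 hab.1)
  · rintro ⟨e, v⟩ hev
    exact ⟨⟨(v, e), by simpa using hev⟩, Finset.mem_univ _, rfl⟩

theorem card_oedge (hH : ∀ e ∈ H, e.card = q) : Fintype.card (OEdge H) = q * H.card := by
  calc Fintype.card (OEdge H) = ∑ e ∈ H, ∑ _v ∈ e, 1 := by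
        rw [← sum_oedge (fun _ _ => 1), Fintype.card_eq_sum_ones]
    _ = ∑ _e ∈ H, q := Finset.sum_congr rfl fun e he => by rw [← Finset.card_eq_sum_ones, hH e he]
    _ = q * H.card := by rw [Finset.sum_const, smul_eq_mul, mul_comm]

variable (H)

/-- The matrix `S` of tails: the row of `v → e` is the indicator of `v`. -/
def tailMatrix : Matrix (OEdge H) (Fin n) ℂ :=
  of fun a v => if a.1.1 = v then 1 else 0

/-- The matrix `T` of targets: the row of `v → e` is the indicator of `e \ {v}`. -/
def targetMatrix : Matrix (OEdge H) (Fin n) ℂ :=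
  of fun a v => if v ∈ a.1.2.erase a.1.1 then 1 else 0

/-- The matrix `P` of underlying hyperedges: the row of `v → e` is the indicator of `e`. -/
def hyperedgeMatrix : Matrix (OEdge H) H ℂ :=
  of fun a e => if a.1.2 = e then 1 else 0

/-- The incidence matrix `R` of the hypergraph, with rows indexed by hyperedges. -/
def incidenceMatrix : Matrix H (Fin n) ℂ :=
  of fun e v => if v ∈ e.1 then 1 else 0

theorem nbMatrix_eq : nbMatrix H =
    targetMatrix H * (tailMatrix H)ᵀ - hyperedgeMatrix H * (hyperedgeMatrix H)ᵀ + 1 := by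
  ext a b
  have hTS : (targetMatrix H * (tailMatrix H)ᵀ) a b =
      if b.1.1 ∈ a.1.2.erase a.1.1 then 1 else 0 := by
    simp [mul_apply, targetMatrix, tailMatrix]
  have hPP : (hyperedgeMatrix H * (hyperedgeMatrix H)ᵀ) a b = if a.1.2 = b.1.2 then 1 else 0 := by
    rw [mul_apply, Fintype.sum_eq_single ⟨a.1.2, a.2.1⟩]
    · simp [hyperedgeMatrix, eq_comm]
    · intro e he
      simp [hyperedgeMatrix, show a.1.2 ≠ e from fun h => he (Subtype.ext h.symm)]
  have hab : a = b ↔ a.1.1 = b.1.1 ∧ a.1.2 = b.1.2 := Subtype.ext_iff.trans Prod.ext_iff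
  have hb : a.1.2 = b.1.2 → b.1.1 ∈ a.1.2 := fun h => h ▸ b.2.2
  simp only [Matrix.add_apply, Matrix.sub_apply, hTS, hPP, one_apply, nbMatrix, hab,
    Finset.mem_erase]
  grind

theorem targetMatrix_transpose_mul_tailMatrix :
    (targetMatrix H)ᵀ * tailMatrix H = adjMatrix H := by
  ext v w
  simp only [mul_apply, transpose_apply, targetMatrix, tailMatrix, of_apply, mul_ite, mul_one,
    mul_zero]
  rw [sum_oedge fun u e => if u = w then if v ∈ e.erase u then (1 : ℂ) else 0 else 0]
  by_cases hvw : v = w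
  · simp [adjMatrix, hvw]
  · simp [adjMatrix, hvw, Finset.card_filter, and_comm (a := v ∈ _), ite_and]

theorem incidenceMatrix_transpose_mul_self :
    (incidenceMatrix H)ᵀ * incidenceMatrix H = adjMatrix H + degMatrix H := by
  ext v w
  simp only [mul_apply, transpose_apply, incidenceMatrix, of_apply]
  rw [Finset.sum_coe_sort H fun e => (if v ∈ e then (1 : ℂ) else 0) * if w ∈ e then 1 else 0]
  by_cases hvw : v = w <;> simp [adjMatrix, degMatrix, hvw, ← ite_and, and_comm]

variable {H}

theorem sum_mul_hyperedgeMatrix (f : Fin n → Finset (Fin n) → ℂ) (e : H) :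
    ∑ a : OEdge H, f a.1.1 a.1.2 * hyperedgeMatrix H a e = ∑ v ∈ e.1, f v e := by
  simp only [hyperedgeMatrix, of_apply]
  rw [sum_oedge fun v g => f v g * if g = e then 1 else 0, Finset.sum_eq_single_of_mem e.1 e.2]
  · simp
  · intro g _ hg
    simp [hg]

theorem hyperedgeMatrix_transpose_mul_tailMatrix :
    (hyperedgeMatrix H)ᵀ * tailMatrix H = incidenceMatrix H := by
  ext e v
  simp only [mul_apply, transpose_apply, tailMatrix, of_apply, mul_comm (hyperedgeMatrix H _ _)]
  rw [sum_mul_hyperedgeMatrix fun u _ => if u = v then 1 else 0]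
  simp [incidenceMatrix]

theorem hyperedgeMatrix_transpose_mul_self (hH : ∀ e ∈ H, e.card = q) :
    (hyperedgeMatrix H)ᵀ * hyperedgeMatrix H = (q : ℂ) • 1 := by
  ext e f
  refine (sum_mul_hyperedgeMatrix (fun _ g => if g = e then 1 else 0) f).trans ?_
  rcases eq_or_ne e f with rfl | hef
  · simp [hH e e.2]
  · simp [hef, Subtype.coe_ne_coe.2 hef.symm]

theorem targetMatrix_transpose_mul_hyperedgeMatrix (hH : ∀ e ∈ H, e.card = q) :
    (targetMatrix H)ᵀ * hyperedgeMatrix H = ((q : ℂ) - 1) • (incidenceMatrix H)ᵀ := by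
  ext v e
  refine (sum_mul_hyperedgeMatrix (fun u g => if v ∈ g.erase u then 1 else 0) e).trans ?_
  by_cases hv : v ∈ e.1
  · calc (∑ u ∈ e.1, if v ∈ e.1.erase u then (1 : ℂ) else 0) = (e.1.erase v).card := by
          simp only [Finset.mem_erase, hv, and_true, Finset.sum_boole, Finset.filter_ne]
      _ = q - 1 := by rw [Finset.cast_card_erase_of_mem hv, hH e e.2]
      _ = (((q : ℂ) - 1) • (incidenceMatrix H)ᵀ) v e := by simp [incidenceMatrix, hv]
  · simp [incidenceMatrix, hv]

/-- The matrix `M = [[-(q-1)I, R], [-(q-1)Rᵀ, A + I]]` on hyperedges and vertices, intermediate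
between the non-backtracking matrix and its `2n × 2n` reduction. -/
def hyperedgeVertexMatrix (q : ℕ) (H : Finset (Finset (Fin n))) :
    Matrix (H ⊕ Fin n) (H ⊕ Fin n) ℂ :=
  fromBlocks (-(((q : ℂ) - 1) • 1)) (incidenceMatrix H)
    (-(((q : ℂ) - 1) • (incidenceMatrix H)ᵀ)) (adjMatrix H + 1)

theorem charpoly_nbMatrix_mul_hyperedgeVertexMatrix (hH : ∀ e ∈ H, e.card = q) :
    (X - C 1) ^ (H.card + n) * (nbMatrix H).charpoly =
      (X - C 1) ^ (q * H.card) * (hyperedgeVertexMatrix q H).charpoly := by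
  let U := fromCols (-hyperedgeMatrix H) (tailMatrix H)
  let W := fromRows (hyperedgeMatrix H)ᵀ (targetMatrix H)ᵀ
  have hUW : U * W + scalar _ 1 = (nbMatrix H)ᵀ := by
    rw [fromCols_mul_fromRows, nbMatrix_eq, map_one, transpose_add, transpose_sub, transpose_mul,
      transpose_mul, transpose_transpose, transpose_transpose, transpose_one, Matrix.neg_mul]
    abel
  have hWU : W * U + scalar _ 1 = hyperedgeVertexMatrix q H := by
    rw [fromRows_mul_fromCols, fromBlocks_add_scalar, Matrix.mul_neg, Matrix.mul_neg,
      hyperedgeMatrix_transpose_mul_self hH, hyperedgeMatrix_transpose_mul_tailMatrix,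
      targetMatrix_transpose_mul_hyperedgeMatrix hH, targetMatrix_transpose_mul_tailMatrix,
      one_smul, one_smul, hyperedgeVertexMatrix]
    congr 1
    module
  have h := charpoly_mul_add_scalar_comm U W 1
  rw [hUW, hWU, charpoly_transpose, card_oedge hH, Fintype.card_sum, Fintype.card_coe,
    Fintype.card_fin] at h
  exact h

theorem charpoly_hyperedgeVertexMatrix_mul (q : ℕ) (H : Finset (Finset (Fin n))) :
    (X - C (-((q : ℂ) - 1))) ^ n * (hyperedgeVertexMatrix q H).charpoly =
      (X - C (-((q : ℂ) - 1))) ^ H.card * (redMatrix q H).charpoly := by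
  let K := fromBlocks 0 (incidenceMatrix H) (-(((q : ℂ) - 1) • (1 : Matrix (Fin n) (Fin n) ℂ)))
    (adjMatrix H + 1)
  let L := fromBlocks (incidenceMatrix H)ᵀ (-1) 0 (1 : Matrix (Fin n) (Fin n) ℂ)
  have hKL : K * L + scalar _ (-((q : ℂ) - 1)) = hyperedgeVertexMatrix q H := by
    rw [fromBlocks_multiply, fromBlocks_add_scalar, hyperedgeVertexMatrix, fromBlocks_inj]
    simp [-neg_sub]
  have hLK : L * K + scalar _ (-((q : ℂ) - 1)) = redMatrix q H := by
    rw [fromBlocks_multiply, fromBlocks_add_scalar, incidenceMatrix_transpose_mul_self, redMatrix]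
    simp only [Matrix.mul_zero, Matrix.zero_mul, Matrix.one_mul, Matrix.neg_mul, neg_neg, zero_add]
    congr 1 <;> module
  have h := charpoly_mul_add_scalar_comm K L (-((q : ℂ) - 1))
  rw [hKL, hLK, Fintype.card_sum, Fintype.card_sum, Fintype.card_fin, Fintype.card_coe,
    add_comm H.card, pow_add, pow_add, mul_assoc, mul_assoc] at h
  exact mul_left_cancel₀ (pow_ne_zero n (X_sub_C_ne_zero _)) h

theorem charpoly_nbMatrix_mul (hH : ∀ e ∈ H, e.card = q) :
    (X - C 1) ^ (H.card + n) * (X - C (-((q : ℂ) - 1))) ^ n * (nbMatrix H).charpoly =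
      (X - C 1) ^ (q * H.card) * (X - C (-((q : ℂ) - 1))) ^ H.card * (redMatrix q H).charpoly := by
  linear_combination (X - C (-((q : ℂ) - 1))) ^ n * charpoly_nbMatrix_mul_hyperedgeVertexMatrix hH +
    (X - C 1) ^ (q * H.card) * charpoly_hyperedgeVertexMatrix_mul q H

theorem roots_charpoly_nbMatrix (hH : ∀ e ∈ H, e.card = q) :
    (H.card + n) • {1} + n • {-((q : ℂ) - 1)} + (nbMatrix H).charpoly.roots =
      (q * H.card) • {1} + H.card • {-((q : ℂ) - 1)} + (redMatrix q H).charpoly.roots := by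
  simpa only [roots_X_sub_C_pow_mul_X_sub_C_pow_mul (charpoly_monic _).ne_zero]
    using congrArg roots (charpoly_nbMatrix_mul hH)

theorem nb_reduced_spectrum_general (hq : q ≠ 0) (hH : ∀ e ∈ H, e.card = q) :
    (∀ lam : ℂ, lam ≠ 1 → lam ≠ -((q : ℂ) - 1) →
      (nbMatrix H).charpoly.rootMultiplicity lam = (redMatrix q H).charpoly.rootMultiplicity lam) ∧
    (q - 1) * H.card - n ≤ (nbMatrix H).charpoly.rootMultiplicity 1 ∧
    H.card - n ≤ (nbMatrix H).charpoly.rootMultiplicity (-((q : ℂ) - 1)) := by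
  have hcount (lam : ℂ) := congrArg (Multiset.count lam) (roots_charpoly_nbMatrix hH)
  simp only [Multiset.count_add, Multiset.count_nsmul, Multiset.count_singleton, count_roots]
    at hcount
  have hne : (1 : ℂ) ≠ -((q : ℂ) - 1) := fun h =>
    Nat.cast_ne_zero.2 hq (by linear_combination h : (q : ℂ) = 0)
  refine ⟨?_, ?_, ?_⟩
  · intro lam h₁ h₂
    simpa only [if_neg h₁, if_neg h₂, mul_zero, zero_add] using hcount lam
  · have h := hcount 1
    simp only [if_true, if_neg hne, mul_one, mul_zero] at h
    rw [Nat.sub_mul]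
    lia
  · have h := hcount (-((q : ℂ) - 1))
    simp only [if_true, if_neg hne.symm, mul_one, mul_zero] at h
    lia

end Hypergraph

/-- For a finite `q`-uniform hypergraph with `n` vertices and `m` hyperedges:
(1) for `λ ∉ {1, −(q−1)}`, `λ` is an eigenvalue of `B` iff it is an eigenvalue of `B̃`;
(2) if `m ≥ n`, then `1` is an eigenvalue of `B` with algebraic multiplicity at least
`(q−1)m − n`, and `−(q−1)` has algebraic multiplicity at least `m − n`. -/
theorem nb_reduced_spectrum (q : ℕ) (hq : 2 ≤ q) (H : Finset (Finset (Fin n)))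
    (huniform : ∀ e ∈ H, e.card = q) :
    (∀ lam : ℂ, lam ≠ 1 → lam ≠ -((q : ℂ) - 1) →
        (IsEigenvalue (nbMatrix H) lam ↔ IsEigenvalue (redMatrix q H) lam)) ∧
    (H.card ≥ n →
        (q - 1) * H.card - n ≤ (Matrix.charpoly (nbMatrix H)).rootMultiplicity 1 ∧
        H.card - n ≤ (Matrix.charpoly (nbMatrix H)).rootMultiplicity (-((q : ℂ) - 1))) := by
  obtain ⟨hspec, hmult⟩ := nb_reduced_spectrum_general (Nat.ne_zero_of_lt hq) huniform
  exact ⟨fun lam h₁ h₂ => by simp only [isEigenvalue_iff_rootMultiplicity_pos, hspec lam h₁ h₂],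
    fun _ => hmult⟩

end HypergraphNB
end

section
/- Fix q ≥ 3, r ≥ 1, a probability vector π ∈ ℝ^r with Π = diag(π), and a symmetric tensor (p_{i₁,…,i_q}) indexed by [r]^q with nonnegative entries satisfying the degree condition Σ_{j̲ ∈ [r]^{q−1}} p_{i,j̲} ∏_{ℓ ∈ j̲} π_ℓ = d for every i ∈ [r]. Then: (1) for all vectors φ, φ′ ∈ ℝ^r, ⟨π, Q^{(3)}(φ⊗φ′)⟩ = φᵀ Π Q φ′; (2) if φ_i, φ_j are eigenvectors of Q with Qφ_i = μ_i φ_i, Qφ_j = μ_j φ_j and ⟨φ_i, φ_j⟩_π = δ_{ij}, then ⟨π, Q^{(3)}(φ_i⊗φ_j)⟩ = μ_i·δ_{ij}, and for every integer s ≥ 0, ⟨π, Q^s y^{(φ_i,φ_j)}⟩ = (d^{s+1} + (q−2)·d^s·μ_i)·δ_{ij}; (3) consequently, if moreover μ_i ≠ 0 and τ_i := d/((q−1)μ_i²) ≠ 1, then for every integer t ≥ 0, ((q−1)²μ_iμ_j)^t·⟨φ_i,φ_j⟩_π + Σ_{s=0}^{t−1} ((q−1)²μ_iμ_j)^t·((q−1)μ_iμ_j)^{−(s+1)}·⟨π,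 Q^s y^{(φ_i,φ_j)}⟩ = ((q−1)μ_i)^{2t}·γ_i^{(t)}·δ_{ij}, where γ_i^{(t)} = (1 − τ_i^{t+1})/(1 − τ_i) + ((q−2)/((q−1)μ_i))·(1 − τ_i^{t})/(1 − τ_i). -/
open scoped BigOperators Matrix

namespace SignalMatrix17

-- Throughout, `q = m + 3` (so `q ≥ 3`); the tensor is `p : (Fin (m+3) → Fin r) → ℝ`.

/-- The signal matrix `Q_{ij} = π_j · Σ_{k̲ ∈ [r]^{q−2}} p_{i,j,k̲} ∏_ℓ π_{k_ℓ}`. -/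
noncomputable def Q (m r : ℕ) (π : Fin r → ℝ) (p : (Fin (m + 3) → Fin r) → ℝ) :
    Matrix (Fin r) (Fin r) ℝ :=
  fun i j => π j * ∑ k : Fin (m + 1) → Fin r,
    p (Fin.cons i (Fin.cons j k)) * ∏ t, π (k t)

/-- The order-3 tensor `Q³_{ijk} = π_j π_k · Σ_{ℓ̲ ∈ [r]^{q−3}} p_{i,j,k,ℓ̲} ∏_m π_{ℓ_m}`. -/
noncomputable def Q3 (m r : ℕ) (π : Fin r → ℝ) (p : (Fin (m + 3) → Fin r) → ℝ)
    (i j k : Fin r) : ℝ :=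
  π j * π k * ∑ l : Fin m → Fin r,
    p (Fin.cons i (Fin.cons j (Fin.cons k l))) * ∏ t, π (l t)

/-- `[Q³(φ⊗φ′)](i) = Σ_{j,k} Q³_{ijk} φ(j) φ′(k)`. -/
noncomputable def Q3app (m r : ℕ) (π : Fin r → ℝ) (p : (Fin (m + 3) → Fin r) → ℝ)
    (φ φ' : Fin r → ℝ) (i : Fin r) : ℝ :=
  ∑ j, ∑ k, Q3 m r π p i j k * φ j * φ' k

/-- `y^{(φ,φ′)} = Q(φ∘φ′) + (q−2)·Q³(φ⊗φ′)`. -/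
noncomputable def yVec (m r : ℕ) (π : Fin r → ℝ) (p : (Fin (m + 3) → Fin r) → ℝ)
    (φ φ' : Fin r → ℝ) (i : Fin r) : ℝ :=
  (Q m r π p).mulVec (fun j => φ j * φ' j) i
    + (((m : ℝ) + 3) - 2) * Q3app m r π p φ φ' i

/-- `γ_i^{(t)} = (1 − τ_i^{t+1})/(1 − τ_i) + ((q−2)/((q−1)μ_i))·(1 − τ_i^t)/(1 − τ_i)`. -/
noncomputable def gamma (m : ℕ) (d μi : ℝ) (t : ℕ) : ℝ :=
  (1 - (d / ((((m : ℝ) + 3) - 1) * μi ^ 2)) ^ (t + 1)) /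
      (1 - d / ((((m : ℝ) + 3) - 1) * μi ^ 2)) +
    ((((m : ℝ) + 3) - 2) / ((((m : ℝ) + 3) - 1) * μi)) *
      ((1 - (d / ((((m : ℝ) + 3) - 1) * μi ^ 2)) ^ t) /
        (1 - d / ((((m : ℝ) + 3) - 1) * μi ^ 2)))

/-!
Symmetry of `p` lets the index of `Q³` that is contracted with `π` be moved into the block of
averaged indices, which turns `πᵀQ³` into `ΠQ`; on eigenvectors this is a multiple of `⟨·,·⟩_π`.
Since `π` is a left eigenvector of `Q` for `d`, every factor `Qˢ` to the right of `πᵀ` contributes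
`dˢ`. As `ΠQ` is symmetric, eigenvectors with different eigenvalues are `π`-orthogonal, so in (3)
one may take `μ_i = μ_j`; the `s`-th summand is then, up to the common factor
`((q-1)μ_i)^(2t) ⟨φ_i,φ_j⟩_π`, equal to `τ^(s+1) + (q-2)/((q-1)μ_i) · τ^s`, which leaves two
geometric sums.
-/

section Tensor

/-- A tensor, encoded by its entries `p f` at the multi-indices `f : ι → α`, that is invariant under
permutations of the index positions `ι`. -/
def IsSymmetricTensor {ι α β : Type*} (p : (ι → α) → β) : Prop :=
  ∀ (g : Equiv.Perm ι) (f : ι → α), p (f ∘ g) = p f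

namespace IsSymmetricTensor

variable {α β : Type*} {n : ℕ}

theorem slice {p : (Fin (n + 1) → α) → β} (hp : IsSymmetricTensor p) (a : α) :
    IsSymmetricTensor fun f : Fin n → α => p (Fin.cons a f) := by
  intro g f
  have cons_comp : (Fin.cons a (f ∘ g) : Fin (n + 1) → α) =
      Fin.cons a f ∘ Equiv.Perm.decomposeFin.symm (0, g) := by
    ext x
    cases x using Fin.cases <;> simp
  simp only [cons_comp, hp _ _]

theorem cons_cons_comm {p : (Fin (n + 2) → α) → β} (hp : IsSymmetricTensor p) (a b : α)
    (f : Fin n → α) : p (Fin.cons a (Fin.cons b f)) = p (Fin.cons b (Fin.cons a f)) := by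
  rw [← hp (Equiv.swap 0 1)]
  exact congrArg p (Matrix.cons_cons_comp_swap_zero_one a b f)

end IsSymmetricTensor

theorem sum_mul_prod_eq_sum_sum_cons {ι R : Type*} [Fintype ι] [CommSemiring R] {n : ℕ}
    (w : ι → R) (F : (Fin (n + 1) → ι) → R) :
    ∑ k, F k * ∏ t, w (k t) =
      ∑ i, w i * ∑ l : Fin n → ι, F (Fin.cons i l) * ∏ t, w (l t) := by
  rw [← (Fin.consEquiv fun _ => ι).sum_comp, Fintype.sum_prod_type]
  simp only [Fin.consEquiv, Equiv.coe_fn_mk, Fin.prod_univ_succ, Fin.cons_zero, Fin.cons_succ,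
    Finset.mul_sum, mul_left_comm]

end Tensor

section WeightedInner

open Matrix

variable {ι R : Type*} [Fintype ι] [CommSemiring R]

/-- The bilinear pairing `⟨x, y⟩_w`; with `w = π` it is the paper's `⟨x, y⟩_π`. -/
def weightedInner (w x y : ι → R) : R :=
  ∑ k, w k * x k * y k

theorem weightedInner_comm (w x y : ι → R) : weightedInner w x y = weightedInner w y x := by
  simp only [weightedInner, mul_right_comm]

theorem dotProduct_mul_eq_weightedInner (w x y : ι → R) :
    w ⬝ᵥ (fun k => x k * y k) = weightedInner w x y := by
  simp only [weightedInner, dotProduct, mul_assoc]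

theorem dotProduct_pow_mulVec_of_vecMul_eq_smul [DecidableEq ι] {A : Matrix ι ι R} {v : ι → R}
    {c : R} (hv : v ᵥ* A = c • v) (s : ℕ) (x : ι → R) :
    v ⬝ᵥ (A ^ s) *ᵥ x = c ^ s * (v ⬝ᵥ x) := by
  induction s with
  | zero => simp
  | succ s ih => rw [pow_succ', ← mulVec_mulVec, dotProduct_mulVec, hv, smul_dotProduct, ih,
      smul_eq_mul, pow_succ', mul_assoc]

variable [DecidableEq ι] {w : ι → R} {A : Matrix ι ι R} {x y : ι → R} {μ ν : R}

theorem dotProduct_diagonal_mul_mulVec_of_mulVec_eq_smul (hy : A *ᵥ y = ν • y) (x : ι → R) :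
    x ⬝ᵥ (diagonal w * A) *ᵥ y = ν * weightedInner w x y := by
  rw [← mulVec_mulVec, hy, mulVec_smul, dotProduct_smul, smul_eq_mul]
  simp only [weightedInner, dotProduct, mulVec_diagonal, mul_left_comm, mul_assoc]

theorem eigenvalue_mul_weightedInner_eq (hA : (diagonal w * A).IsSymm)
    (hx : A *ᵥ x = μ • x) (hy : A *ᵥ y = ν • y) :
    μ * weightedInner w x y = ν * weightedInner w x y := by
  calc μ * weightedInner w x y = y ⬝ᵥ (diagonal w * A) *ᵥ x := by
        rw [dotProduct_diagonal_mul_mulVec_of_mulVec_eq_smul hx, weightedInner_comm]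
    _ = x ⬝ᵥ (diagonal w * A) *ᵥ y := by
        rw [← dotProduct_transpose_mulVec, hA.eq]
    _ = ν * weightedInner w x y := dotProduct_diagonal_mul_mulVec_of_mulVec_eq_smul hy x

end WeightedInner

section GeometricSum

variable {K : Type*} [Field K]

theorem one_add_sum_range_pow_succ_add_mul_pow {τ : K} (hτ : τ ≠ 1) (e : K) (t : ℕ) :
    1 + ∑ s ∈ Finset.range t, (τ ^ (s + 1) + e * τ ^ s) =
      (1 - τ ^ (t + 1)) / (1 - τ) + e * ((1 - τ ^ t) / (1 - τ)) := by
  have geom_sum (n : ℕ) : (1 - τ ^ n) / (1 - τ) = ∑ s ∈ Finset.range n, τ ^ s := by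
    rw [geom_sum_eq hτ, ← neg_div_neg_eq, neg_sub, neg_sub]
  rw [geom_sum, geom_sum, Finset.sum_range_succ', Finset.sum_add_distrib, Finset.mul_sum]
  ring

theorem inv_mul_mul_pow_mul_eq {a μ : K} (ha : a ≠ 0) (hμ : μ ≠ 0) (c d : K) (s : ℕ) :
    ((a * μ * μ) ^ (s + 1))⁻¹ * (d ^ (s + 1) + c * d ^ s * μ) =
      (d / (a * μ ^ 2)) ^ (s + 1) + c / (a * μ) * (d / (a * μ ^ 2)) ^ s := by
  rw [div_pow, div_pow]
  field_simp
  ring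

theorem one_add_sum_eq_gamma {m : ℕ} {d μ : ℝ} (hμ : μ ≠ 0)
    (hτ : d / (((m : ℝ) + 3 - 1) * μ ^ 2) ≠ 1) (t : ℕ) :
    1 + ∑ s ∈ Finset.range t, ((((m : ℝ) + 3 - 1) * μ * μ) ^ (s + 1))⁻¹ *
        (d ^ (s + 1) + ((m : ℝ) + 3 - 2) * d ^ s * μ) = gamma m d μ t := by
  have q_sub_one_ne_zero : (m : ℝ) + 3 - 1 ≠ 0 := by
    linarith [m.cast_nonneg (α := ℝ)]
  simp only [inv_mul_mul_pow_mul_eq q_sub_one_ne_zero hμ]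
  exact one_add_sum_range_pow_succ_add_mul_pow hτ _ t

end GeometricSum

section SignalMatrix

open Matrix

variable {m r : ℕ} {π : Fin r → ℝ} {p : (Fin (m + 3) → Fin r) → ℝ} {d μ μ' : ℝ}
  {ψ ψ' : Fin r → ℝ}

theorem mul_Q_comm (hp : IsSymmetricTensor p) (i j : Fin r) :
    π i * Q m r π p i j = π j * Q m r π p j i := by
  simp only [Q, hp.cons_cons_comm i j, mul_left_comm]

theorem isSymm_diagonal_mul_Q (hp : IsSymmetricTensor p) :
    (diagonal π * Q m r π p).IsSymm :=
  IsSymm.ext fun i j => by simp only [diagonal_mul, mul_Q_comm hp i j]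

theorem vecMul_Q (hp : IsSymmetricTensor p)
    (hdeg : ∀ i, ∑ j : Fin (m + 2) → Fin r, p (Fin.cons i j) * ∏ t, π (j t) = d) :
    π ᵥ* Q m r π p = d • π := by
  ext j
  calc ∑ i, π i * Q m r π p i j
      = π j * ∑ i, π i * ∑ k : Fin (m + 1) → Fin r,
          p (Fin.cons j (Fin.cons i k)) * ∏ t, π (k t) := by
        simp_rw [mul_Q_comm hp _ j, ← Finset.mul_sum, Q]
    _ = d * π j := by
        rw [← sum_mul_prod_eq_sum_sum_cons π fun l => p (Fin.cons j l), hdeg, mul_comm]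

theorem sum_mul_Q3 (hp : IsSymmetricTensor p) (j k : Fin r) :
    ∑ i, π i * Q3 m r π p i j k = π j * Q m r π p j k := by
  have rotate (i : Fin r) (l : Fin m → Fin r) :
      p (Fin.cons i (Fin.cons j (Fin.cons k l))) = p (Fin.cons j (Fin.cons k (Fin.cons i l))) := by
    rw [hp.cons_cons_comm, (hp.slice j).cons_cons_comm]
  simp only [Q3, Q, rotate, sum_mul_prod_eq_sum_sum_cons π fun l => p (Fin.cons j (Fin.cons k l)),
    Finset.mul_sum]
  simp only [mul_left_comm, mul_assoc]

theorem dotProduct_Q3app (hp : IsSymmetricTensor p) (ψ ψ' : Fin r → ℝ) :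
    π ⬝ᵥ Q3app m r π p ψ ψ' = ψ ⬝ᵥ (diagonal π * Q m r π p) *ᵥ ψ' := by
  calc π ⬝ᵥ Q3app m r π p ψ ψ'
      = ∑ j, ∑ k, (∑ i, π i * Q3 m r π p i j k) * ψ j * ψ' k := by
        simp only [dotProduct, Q3app, Finset.mul_sum, Finset.sum_mul, mul_assoc]
        rw [Finset.sum_comm]
        exact Finset.sum_congr rfl fun _ _ => Finset.sum_comm
    _ = ψ ⬝ᵥ (diagonal π * Q m r π p) *ᵥ ψ' := by
        simp only [sum_mul_Q3 hp, dotProduct, mulVec, diagonal_mul, Finset.mul_sum]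
        simp only [mul_left_comm, mul_assoc]

theorem dotProduct_Q3app_of_eigenvectors (hp : IsSymmetricTensor p)
    (hψ : Q m r π p *ᵥ ψ = μ • ψ) (hψ' : Q m r π p *ᵥ ψ' = μ' • ψ') :
    π ⬝ᵥ Q3app m r π p ψ ψ' = μ * weightedInner π ψ ψ' := by
  rw [dotProduct_Q3app hp, dotProduct_diagonal_mul_mulVec_of_mulVec_eq_smul hψ',
    eigenvalue_mul_weightedInner_eq (isSymm_diagonal_mul_Q hp) hψ hψ']

theorem dotProduct_yVec (hπ : π ᵥ* Q m r π p = d • π) (ψ ψ' : Fin r → ℝ) :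
    π ⬝ᵥ yVec m r π p ψ ψ' =
      d * weightedInner π ψ ψ' + ((m : ℝ) + 3 - 2) * (π ⬝ᵥ Q3app m r π p ψ ψ') := by
  have yVec_eq : yVec m r π p ψ ψ' =
      Q m r π p *ᵥ (fun j => ψ j * ψ' j) + ((m : ℝ) + 3 - 2) • Q3app m r π p ψ ψ' := rfl
  rw [yVec_eq, dotProduct_add, dotProduct_mulVec, hπ, smul_dotProduct, dotProduct_smul,
    dotProduct_mul_eq_weightedInner, smul_eq_mul, smul_eq_mul]

theorem dotProduct_pow_mulVec_yVec (hp : IsSymmetricTensor p) (hπ : π ᵥ* Q m r π p = d • π)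
    (hψ : Q m r π p *ᵥ ψ = μ • ψ) (hψ' : Q m r π p *ᵥ ψ' = μ' • ψ') (s : ℕ) :
    π ⬝ᵥ (Q m r π p ^ s) *ᵥ yVec m r π p ψ ψ' =
      (d ^ (s + 1) + ((m : ℝ) + 3 - 2) * d ^ s * μ) * weightedInner π ψ ψ' := by
  rw [dotProduct_pow_mulVec_of_vecMul_eq_smul hπ, dotProduct_yVec hπ,
    dotProduct_Q3app_of_eigenvectors hp hψ hψ']
  ring

theorem weightedInner_add_sum_dotProduct_eq_gamma (hp : IsSymmetricTensor p)
    (hπ : π ᵥ* Q m r π p = d • π)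
    (hψ : Q m r π p *ᵥ ψ = μ • ψ) (hψ' : Q m r π p *ᵥ ψ' = μ' • ψ')
    (hμ : μ ≠ 0) (hτ : d / (((m : ℝ) + 3 - 1) * μ ^ 2) ≠ 1) (t : ℕ) :
    (((m : ℝ) + 3 - 1) ^ 2 * μ * μ') ^ t * weightedInner π ψ ψ' +
        ∑ s ∈ Finset.range t, (((m : ℝ) + 3 - 1) ^ 2 * μ * μ') ^ t *
          ((((m : ℝ) + 3 - 1) * μ * μ') ^ (s + 1))⁻¹ *
          (π ⬝ᵥ (Q m r π p ^ s) *ᵥ yVec m r π p ψ ψ') =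
      (((m : ℝ) + 3 - 1) * μ) ^ (2 * t) * gamma m d μ t * weightedInner π ψ ψ' := by
  simp only [dotProduct_pow_mulVec_yVec hp hπ hψ hψ']
  rcases eq_or_ne (weightedInner π ψ ψ') 0 with orthogonal | not_orthogonal
  · simp [orthogonal]
  obtain rfl : μ = μ' := mul_right_cancel₀ not_orthogonal
    (eigenvalue_mul_weightedInner_eq (isSymm_diagonal_mul_Q hp) hψ hψ')
  have pow_eq : (((m : ℝ) + 3 - 1) ^ 2 * μ * μ) ^ t = (((m : ℝ) + 3 - 1) * μ) ^ (2 * t) := by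
    rw [pow_mul]
    ring
  rw [← one_add_sum_eq_gamma hμ hτ, pow_eq, mul_add, mul_one, add_mul, Finset.mul_sum,
    Finset.sum_mul]
  simp only [mul_assoc]

end SignalMatrix

theorem pi_functionals_general {m r : ℕ} {π : Fin r → ℝ} {p : (Fin (m + 3) → Fin r) → ℝ}
    (hp : IsSymmetricTensor p) {d : ℝ}
    (hdeg : ∀ i, ∑ j : Fin (m + 2) → Fin r, p (Fin.cons i j) * ∏ t, π (j t) = d) :
    (∀ ψ ψ' : Fin r → ℝ,
      π ⬝ᵥ Q3app m r π p ψ ψ' = ψ ⬝ᵥ (Matrix.diagonal π * Q m r π p) *ᵥ ψ') ∧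
    ∀ ⦃ψ ψ' : Fin r → ℝ⦄ ⦃μ μ' : ℝ⦄,
      Q m r π p *ᵥ ψ = μ • ψ → Q m r π p *ᵥ ψ' = μ' • ψ' →
      (π ⬝ᵥ Q3app m r π p ψ ψ' = μ * weightedInner π ψ ψ' ∧
        ∀ s : ℕ, π ⬝ᵥ (Q m r π p ^ s) *ᵥ yVec m r π p ψ ψ' =
          (d ^ (s + 1) + ((m : ℝ) + 3 - 2) * d ^ s * μ) * weightedInner π ψ ψ') ∧
      (μ ≠ 0 → d / (((m : ℝ) + 3 - 1) * μ ^ 2) ≠ 1 → ∀ t : ℕ,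
        (((m : ℝ) + 3 - 1) ^ 2 * μ * μ') ^ t * weightedInner π ψ ψ' +
            ∑ s ∈ Finset.range t, (((m : ℝ) + 3 - 1) ^ 2 * μ * μ') ^ t *
              ((((m : ℝ) + 3 - 1) * μ * μ') ^ (s + 1))⁻¹ *
              (π ⬝ᵥ (Q m r π p ^ s) *ᵥ yVec m r π p ψ ψ') =
          (((m : ℝ) + 3 - 1) * μ) ^ (2 * t) * gamma m d μ t * weightedInner π ψ ψ') :=
  have hπ := vecMul_Q hp hdeg
  ⟨dotProduct_Q3app hp, fun _ _ _ _ hψ hψ' =>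
    ⟨⟨dotProduct_Q3app_of_eigenvectors hp hψ hψ', dotProduct_pow_mulVec_yVec hp hπ hψ hψ'⟩,
      weightedInner_add_sum_dotProduct_eq_gamma hp hπ hψ hψ'⟩⟩

/-- Identities for `⟨π, Q³(φ⊗φ′)⟩`, `⟨π, Qˢ y^{(φ_i,φ_j)}⟩`, and the
resulting closed form `((q−1)μ_i)^{2t} γ_i^{(t)} δ_{ij}`. -/
theorem pi_functionals (m r : ℕ) (hr : 1 ≤ r)
    (π : Fin r → ℝ) (hπ : ∀ k, 0 ≤ π k) (hπ1 : ∑ k, π k = 1)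
    (p : (Fin (m + 3) → Fin r) → ℝ) (hp : ∀ f, 0 ≤ p f)
    (hsym : ∀ (g : Equiv.Perm (Fin (m + 3))) (f : Fin (m + 3) → Fin r), p (f ∘ g) = p f)
    (d : ℝ)
    (hdeg : ∀ i : Fin r,
      ∑ j : Fin (m + 2) → Fin r, p (Fin.cons i j) * ∏ t, π (j t) = d)
    (μ : Fin r → ℝ) (φ : Fin r → Fin r → ℝ)
    (heig : ∀ k, (Q m r π p).mulVec (φ k) = μ k • φ k)
    (horth : ∀ k l, ∑ t, π t * φ k t * φ l t = if k = l then (1 : ℝ) else 0) :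
    -- (1)
    (∀ ψ ψ' : Fin r → ℝ,
        ∑ i, π i * Q3app m r π p ψ ψ' i =
          ψ ⬝ᵥ (Matrix.diagonal π * Q m r π p).mulVec ψ') ∧
    -- (2)
    (∀ i j : Fin r,
        (∑ t, π t * Q3app m r π p (φ i) (φ j) t =
          μ i * (if i = j then (1 : ℝ) else 0)) ∧
        (∀ s : ℕ,
          ∑ t, π t * ((Q m r π p) ^ s).mulVec (yVec m r π p (φ i) (φ j)) t =
            (d ^ (s + 1) + ((((m : ℝ) + 3) - 2) * d ^ s * μ i)) *
              (if i = j then (1 : ℝ) else 0))) ∧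
    -- (3)
    (∀ i j : Fin r, μ i ≠ 0 → d / ((((m : ℝ) + 3) - 1) * μ i ^ 2) ≠ 1 → ∀ t : ℕ,
        ((((m : ℝ) + 3) - 1) ^ 2 * μ i * μ j) ^ t * (∑ k, π k * φ i k * φ j k) +
          ∑ s ∈ Finset.range t,
            ((((m : ℝ) + 3) - 1) ^ 2 * μ i * μ j) ^ t *
              (((((m : ℝ) + 3) - 1) * μ i * μ j) ^ (s + 1))⁻¹ *
              (∑ k, π k * ((Q m r π p) ^ s).mulVec (yVec m r π p (φ i) (φ j)) k) =
        ((((m : ℝ) + 3) - 1) * μ i) ^ (2 * t) * gamma m d (μ i) t *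
          (if i = j then (1 : ℝ) else 0)) := by
  simp only [← horth]
  exact (pi_functionals_general hsym hdeg).imp_right fun on_eigenvectors =>
    ⟨fun i j => (on_eigenvectors (heig i) (heig j)).1,
      fun i j => (on_eigenvectors (heig i) (heig j)).2⟩

end SignalMatrix17
end
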